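/- arXiv:1703.03516 — 2 statements merged into one kernel-verified Lean document; each statement's English description precedes it below -/
import Mathlib

section
/- Let p be an odd prime, k an algebraically closed field of characteristic p, and g an integer with g ≥ p. For every squarefree polynomial f(x) = Σ_{i=1}^{2g+1} c_i x^i in k[x] with c_{2g+1} = 1 (so f is monic of degree 2g+1 and f(0) = 0), the g×g Cartier–Manin matrix A = [a_{ij}] with a_{ij} = κ_{pi−j}, where f(x)^{(p−1)/2} = Σ_m κ_m x^m and κ_m = 0 for m < 0, does not have rank 1. (Equivalently: there are no smooth hyperelliptic curves of genus g ≥ p over k whose a-number equals g−1.) -/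
open Polynomial

/-!
Put `F = f ^ ((p - 1) / 2)`. The first `p` columns of the Cartier–Manin matrix hold every
coefficient of `F`: column `j` lists those with exponent congruent to `-j` modulo `p`. If the rank
is at most one, all these residue classes are proportional to one vector `v`, so `F = R(x) V(x^p)`
with `deg R < p` and `V` read off from `v`. Now `E = V(x^p)` has derivative zero and divides a power
of `f`. Differentiating `f ^ (n + 1) = E * q` with `n + 1 < p` shows that `E` divides `f ^ n * f'`;
it also divides `f ^ n * f`, hence `f ^ n`, because `f` and `f'` are coprime. Descending, `E` is a
unit, and `deg F = deg R < p`, which is too small.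
-/

/-- `A` has the entries of the Cartier–Manin matrix of the curve `y² = f` when
`F = f ^ ((p - 1) / 2)`; rows and columns are numbered from zero, so `A i j` is the coefficient of
exponent `p (i + 1) - (j + 1)`. Where this exponent is negative (and the subtraction would
truncate), nothing is asked of `A`. -/
def HasCartierManinEntries {R : Type*} [Semiring R] {g m : ℕ} (p : ℕ) (F : R[X])
    (A : Matrix (Fin g) (Fin m) R) : Prop :=
  ∀ (i : Fin g) (j : Fin m), (j : ℕ) + 1 ≤ p * ((i : ℕ) + 1) →
    A i j = F.coeff (p * ((i : ℕ) + 1) - ((j : ℕ) + 1))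

theorem exists_eq_vecMulVec_of_rank_le_one {K m n : Type*} [Field K] [Finite m] [Fintype n]
    {A : Matrix m n K} (hA : A.rank ≤ 1) : ∃ v w, A = Matrix.vecMulVec v w := by
  classical
  obtain ⟨v, hv⟩ := (Submodule.finrank_le_one_iff_isPrincipal _).mp hA
  have col_mem (j : n) : A.col j ∈ Submodule.span K {v} := by
    rw [← hv, Matrix.range_mulVecLin]
    exact Submodule.subset_span ⟨j, rfl⟩
  choose w hw using fun j ↦ Submodule.mem_span_singleton.mp (col_mem j)
  refine ⟨v, w, Matrix.ext fun i j ↦ ?_⟩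
  rw [Matrix.vecMulVec_apply, mul_comm]
  exact (congrFun (hw j) i).symm

theorem eq_sum_mul_expand_of_coeff_eq_mul {R : Type*} [CommSemiring R] {F : R[X]} {p g : ℕ}
    (hF : F.natDegree < g * p) {r : Fin p → R} {v : Fin g → R}
    (hcoeff : ∀ (i : Fin g) (s : Fin p), F.coeff (s + p * i) = r s * v i) :
    F = (∑ s, C (r s) * X ^ (s : ℕ)) * expand R p (∑ i, C (v i) * X ^ (i : ℕ)) := by
  conv_lhs => rw [F.as_sum_range_C_mul_X_pow' hF]
  rw [Finset.sum_range, ← finProdFinEquiv.sum_comp, Fintype.sum_prod_type_right,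
    map_sum, Finset.sum_mul_sum]
  refine Finset.sum_congr rfl fun s _ ↦ Finset.sum_congr rfl fun i _ ↦ ?_
  simp only [finProdFinEquiv_apply_val, hcoeff, map_mul, expand_C, map_pow, expand_X]
  ring

theorem HasCartierManinEntries.exists_eq_mul_expand {K : Type*} [Field K] {p g m : ℕ}
    {F : K[X]} {A : Matrix (Fin g) (Fin m) K} (hA : HasCartierManinEntries p F A)
    (hpm : p ≤ m) (hF : F.natDegree < g * p) (hrank : A.rank ≤ 1) :
    ∃ R V : K[X], R.degree < p ∧ F = R * expand K p V := by
  obtain ⟨v, w, rfl⟩ := exists_eq_vecMulVec_of_rank_le_one hrank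
  refine ⟨_, _, degree_sum_fin_lt _,
    eq_sum_mul_expand_of_coeff_eq_mul hF (r := fun s ↦ w (Fin.castLE hpm s.rev)) (v := v) ?_⟩
  intro i s
  have hcol : p - (s + 1) + 1 ≤ p * ((i : ℕ) + 1) := by rw [mul_add_one]; omega
  have hindex : p * ((i : ℕ) + 1) - (p - (s + 1) + 1) = s + p * i := by
    rw [mul_add_one]; omega
  have hentry := hA i (Fin.castLE hpm s.rev)
  simp only [Fin.val_castLE, Fin.val_rev, hindex, Matrix.vecMulVec_apply] at hentry
  rw [← hentry hcol, mul_comm]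

theorem isUnit_of_dvd_pow_of_derivative_eq_zero {R : Type*} [CommRing R] {f E : R[X]}
    (hf : f.Separable) (hE : derivative E = 0) {n : ℕ} (hn : IsUnit (n.factorial : R))
    (hdvd : E ∣ f ^ n) : IsUnit E := by
  induction n with
  | zero => exact isUnit_of_dvd_one (by simpa only [pow_zero] using hdvd)
  | succ n ih =>
    rw [Nat.factorial_succ, Nat.cast_mul, IsUnit.mul_iff] at hn
    obtain ⟨hsucc, hfactorial⟩ := hn
    have hdvd_derivative : E ∣ f ^ n * derivative f := by
      obtain ⟨q, hq⟩ := hdvd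
      have hdiff : C ((n + 1 : ℕ) : R) * (f ^ n * derivative f) = E * derivative q := by
        simpa only [derivative_pow_succ, derivative_mul, hE, zero_mul, zero_add, mul_assoc,
          Nat.cast_succ] using congrArg derivative hq
      exact (hsucc.map C).dvd_mul_left.mp ⟨_, hdiff⟩
    obtain ⟨a, b, hab⟩ := hf
    refine ih hfactorial ?_
    calc E ∣ a * (f ^ (n + 1)) + b * (f ^ n * derivative f) :=
          dvd_add (hdvd.mul_left a) (hdvd_derivative.mul_left b)
      _ = f ^ n * (a * f + b * derivative f) := by ring
      _ = f ^ n := by rw [hab, mul_one]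

theorem derivative_expand_eq_zero {R : Type*} [CommSemiring R] (p : ℕ) [CharP R p] (V : R[X]) :
    derivative (expand R p V) = 0 := by
  rw [derivative_expand, CharP.cast_eq_zero, zero_mul, mul_zero]

theorem HasCartierManinEntries.one_lt_rank {K : Type*} [Field K] {p g m n : ℕ} [Fact p.Prime]
    [CharP K p] {f : K[X]} {A : Matrix (Fin g) (Fin m) K}
    (hA : HasCartierManinEntries p (f ^ n) A) (hf : f.Separable) (hpm : p ≤ m) (hnp : n < p)
    (hlow : p ≤ n * f.natDegree) (hhigh : n * f.natDegree < g * p) : 1 < A.rank := by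
  by_contra! hrank
  rw [← natDegree_pow] at hlow hhigh
  obtain ⟨R, V, hR, hRV⟩ := hA.exists_eq_mul_expand hpm hhigh hrank
  have hV : IsUnit (expand K p V) :=
    isUnit_of_dvd_pow_of_derivative_eq_zero hf (derivative_expand_eq_zero p V)
      ((IsUnit.natCast_factorial_iff_of_charP p).mpr hnp) (Dvd.intro_left R hRV.symm)
  have hdegree : (f ^ n).degree < p := by
    rwa [hRV, degree_mul, degree_eq_zero_of_isUnit hV, add_zero]
  exact hlow.not_gt ((natDegree_lt_iff_degree_lt (pow_ne_zero n hf.ne_zero)).mpr hdegree)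

theorem natDegree_sum_C_mul_X_pow_eq {R : Type*} [Semiring R] {s : Finset ℕ} {d : ℕ} {c : ℕ → R}
    (hd : IsGreatest (s : Set ℕ) d) (hc : c d ≠ 0) :
    (∑ i ∈ s, C (c i) * X ^ i).natDegree = d := by
  apply natDegree_eq_of_le_of_coeff_ne_zero
  · exact natDegree_sum_le_of_forall_le _ _ fun i hi ↦
      (natDegree_C_mul_X_pow_le _ _).trans (hd.2 hi)
  · have hds : d ∈ s := hd.1
    simpa [coeff_X_pow, hds] using hc

theorem no_hyperelliptic_aNumber_g_sub_one_of_p_le_genus_general {K : Type*} [Field K] {p g : ℕ}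
    [CharP K p] (hp : p.Prime) (hodd : Odd p) (hg : p ≤ g) {f : K[X]} (hf : f.Separable)
    (hlow : 3 ≤ f.natDegree) (hhigh : f.natDegree ≤ 2 * g + 2) {A : Matrix (Fin g) (Fin g) K}
    (hA : HasCartierManinEntries p (f ^ ((p - 1) / 2)) A) : 1 < A.rank := by
  have : Fact p.Prime := ⟨hp⟩
  obtain ⟨n, rfl⟩ := hodd
  rw [show (2 * n + 1 - 1) / 2 = n by omega] at hA
  have hn : 1 ≤ n := by have := hp.two_le; omega
  exact hA.one_lt_rank hf hg (by omega) (by nlinarith) (by nlinarith)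

/-- There are no smooth hyperelliptic curves of genus `g ≥ p` over an algebraically
closed field of characteristic `p` (odd prime) with `a`-number `g - 1`; equivalently,
the Cartier–Manin matrix of a squarefree `f` never has rank one. -/
theorem no_hyperelliptic_aNumber_g_sub_one_of_p_le_genus
    (p : ℕ) (hp : p.Prime) (hodd : Odd p)
    (k : Type*) [Field k] [IsAlgClosed k] [CharP k p]
    (g : ℕ) (hg : p ≤ g)
    (c : ℕ → k) (hclead : c (2 * g + 1) = 1)
    (f : k[X]) (hf : f = ∑ i ∈ Finset.Icc 1 (2 * g + 1), C (c i) * X ^ i)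
    (hsqf : Squarefree f)
    (A : Matrix (Fin g) (Fin g) k)
    (hA : ∀ i j : Fin g,
      A i j = (f ^ ((p - 1) / 2)).coeff (p * ((i : ℕ) + 1) - ((j : ℕ) + 1))) :
    A.rank ≠ 1 := by
  have hdeg : f.natDegree = 2 * g + 1 := hf ▸ natDegree_sum_C_mul_X_pow_eq
    (by simpa using isGreatest_Icc (Nat.le_add_left 1 (2 * g))) (hclead ▸ one_ne_zero)
  exact (no_hyperelliptic_aNumber_g_sub_one_of_p_le_genus_general hp hodd hg
    (PerfectField.separable_iff_squarefree.mpr hsqf) (by have := hp.two_le; omega) (by omega)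
    fun i j _ ↦ hA i j).ne'
end

section
/- Let p be an odd prime, k an algebraically closed field of characteristic p, and g an integer with g > p. Let f(x) = Σ_{i=1}^{2g+1} c_i x^i in k[x] with c_{2g+1} = 1, and let A be the g×g matrix with entries a_{ij} = κ_{pi−j}, where f(x)^{(p−1)/2} = Σ_m κ_m x^m (κ_m = 0 for m < 0). If rank(A) = 1, then c_1 = 0; consequently x² divides f and f is not squarefree. -/
open Polynomial

/-! Write `n = (p - 1) / 2`. Rows `1, g` and columns `n + 1, g - n` of the Cartier–Manin matrix
cut out the minor with entries

  `κ_n = c₁ ^ n`,  `κ_{p - (g - n)} = 0`,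
  `κ_{pg - (n + 1)}`,  `κ_{n (2g + 1)} = c_{2g+1} ^ n`:

the diagonal entries are the lowest and highest coefficients of `f ^ n`, and the upper right one
lies below the lowest because `p < g`. So the minor equals `(c₁ c_{2g+1}) ^ n`, and it has to
vanish as soon as the rank is at most one. -/

section CommSemiring

variable {R : Type*} [CommSemiring R]

theorem coeff_pow_of_X_dvd {f : R[X]} (hf : X ∣ f) (n : ℕ) :
    (f ^ n).coeff n = f.coeff 1 ^ n := by
  obtain ⟨h, rfl⟩ := hf
  rw [mul_pow, coeff_X_pow_mul', if_pos le_rfl, Nat.sub_self, coeff_X_mul,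
    coeff_zero_eq_eval_zero, coeff_zero_eq_eval_zero, eval_pow]

theorem coeff_pow_eq_zero_of_X_dvd {f : R[X]} (hf : X ∣ f) {m n : ℕ} (hmn : m < n) :
    (f ^ n).coeff m = 0 :=
  X_pow_dvd_iff.1 (pow_dvd_pow_of_dvd hf n) m hmn

theorem X_sq_dvd_of_coeff_eq_zero {f : R[X]} (h₀ : f.coeff 0 = 0) (h₁ : f.coeff 1 = 0) :
    X ^ 2 ∣ f := by
  rw [X_pow_dvd_iff]
  intro d hd
  interval_cases d <;> assumption

theorem not_squarefree_of_X_sq_dvd [Nontrivial R] {f : R[X]} (hf : X ^ 2 ∣ f) :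
    ¬ Squarefree f :=
  fun hsq => not_isUnit_X (hsq X (by rwa [← pow_two]))

theorem coeff_sum_C_mul_X_pow (s : Finset ℕ) (c : ℕ → R) (m : ℕ) :
    (∑ i ∈ s, C (c i) * X ^ i).coeff m = if m ∈ s then c m else 0 := by
  simp [coeff_X_pow]

/-- The Cartier–Manin matrix `a_{ij} = κ_{pi - j}`, `1 ≤ i, j ≤ g`, of `y ^ 2 = f`, with rows and
columns indexed from `0`. Natural subtraction replaces a negative index `pi - j` by `0`, which is
harmless when `f.coeff 0 = 0` and `3 ≤ p`, as then `κ_0 = 0`. -/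
noncomputable def cartierManinMatrix (p g : ℕ) (f : R[X]) : Matrix (Fin g) (Fin g) R :=
  Matrix.of fun i j => (f ^ ((p - 1) / 2)).coeff (p * ((i : ℕ) + 1) - ((j : ℕ) + 1))

end CommSemiring

theorem det_submatrix_eq_zero_of_rank_lt {R m n ι : Type*} [CommRing R] [IsDomain R] [Fintype n]
    [Fintype ι] [DecidableEq ι] {A : Matrix m n R} (hA : A.rank < Fintype.card ι)
    (r : ι → m) (s : ι → n) : (A.submatrix r s).det = 0 := by
  by_contra hdet
  exact hA.not_ge (Matrix.rank_of_det_ne_zero hdet ▸ A.rank_submatrix_le r s)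

theorem det_submatrix_cartierManinMatrix {R : Type*} [CommRing R] {p g : ℕ} (hodd : Odd p)
    (hp : 1 < p) (hg : p < g) {f : R[X]} (hX : X ∣ f) (hdeg : f.natDegree ≤ 2 * g + 1)
    {i i' j j' : Fin g} (hi : (i : ℕ) + 1 = 1) (hi' : (i' : ℕ) + 1 = g)
    (hj : (j : ℕ) + 1 = (p - 1) / 2 + 1) (hj' : (j' : ℕ) + 1 = g - (p - 1) / 2) :
    ((cartierManinMatrix p g f).submatrix ![i, i'] ![j, j']).det =
      (f.coeff 1 * f.coeff (2 * g + 1)) ^ ((p - 1) / 2) := by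
  obtain ⟨n, rfl⟩ := hodd
  have hn : (2 * n + 1 - 1) / 2 = n := by omega
  rw [hn] at hj hj' ⊢
  have lowest : cartierManinMatrix (2 * n + 1) g f i j = f.coeff 1 ^ n := by
    have hindex : (2 * n + 1) * 1 - (n + 1) = n := by omega
    rw [cartierManinMatrix, Matrix.of_apply, hn, hi, hj, hindex, coeff_pow_of_X_dvd hX]
  have below_lowest : cartierManinMatrix (2 * n + 1) g f i j' = 0 := by
    rw [cartierManinMatrix, Matrix.of_apply, hn, hi, hj']
    exact coeff_pow_eq_zero_of_X_dvd hX (by omega)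
  have highest : cartierManinMatrix (2 * n + 1) g f i' j' = f.coeff (2 * g + 1) ^ n := by
    have hindex : (2 * n + 1) * g - (g - n) = n * (2 * g + 1) := by
      have hsub : g - n + n = g := by omega
      exact Nat.sub_eq_of_eq_add (by linarith)
    rw [cartierManinMatrix, Matrix.of_apply, hn, hi', hj', hindex, coeff_pow_of_natDegree_le hdeg]
  rw [Matrix.det_fin_two]
  simp [lowest, below_lowest, highest, mul_pow]

theorem coeff_one_eq_zero_of_rank_cartierManinMatrix_le_one {R : Type*} [CommRing R] [IsDomain R]
    {p g : ℕ} (hodd : Odd p) (hp : 1 < p) (hg : p < g) {f : R[X]} (hX : X ∣ f)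
    (hdeg : f.natDegree ≤ 2 * g + 1) (hlead : f.coeff (2 * g + 1) ≠ 0)
    (hrank : (cartierManinMatrix p g f).rank ≤ 1) : f.coeff 1 = 0 := by
  have hminor : (f.coeff 1 * f.coeff (2 * g + 1)) ^ ((p - 1) / 2) = 0 := by
    rw [← det_submatrix_cartierManinMatrix hodd hp hg hX hdeg (i := ⟨0, by omega⟩)
      (i' := ⟨g - 1, by omega⟩) (j := ⟨(p - 1) / 2, by omega⟩)
      (j' := ⟨g - (p - 1) / 2 - 1, by omega⟩) rfl (by grind) rfl (by grind)]
    exact det_submatrix_eq_zero_of_rank_lt (by simpa [Nat.lt_succ_iff] using hrank) _ _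
  exact (mul_eq_zero.1 (eq_zero_of_pow_eq_zero hminor)).resolve_right hlead

theorem c_one_eq_zero_of_rank_one_of_p_lt_genus_general
    {R : Type*} [CommRing R] [IsDomain R] (p : ℕ) (hodd : Odd p) (hp : 1 < p)
    (g : ℕ) (hg : p < g)
    (c : ℕ → R) (hclead : c (2 * g + 1) ≠ 0)
    (f : R[X]) (hf : f = ∑ i ∈ Finset.Icc 1 (2 * g + 1), C (c i) * X ^ i)
    (A : Matrix (Fin g) (Fin g) R)
    (hA : ∀ i j : Fin g,
      A i j = (f ^ ((p - 1) / 2)).coeff (p * ((i : ℕ) + 1) - ((j : ℕ) + 1)))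
    (hrank : A.rank ≤ 1) :
    c 1 = 0 ∧ X ^ 2 ∣ f ∧ ¬ Squarefree f := by
  obtain rfl : A = cartierManinMatrix p g f := Matrix.ext hA
  have hcoeff (m : ℕ) : f.coeff m = if m ∈ Finset.Icc 1 (2 * g + 1) then c m else 0 := by
    rw [hf, coeff_sum_C_mul_X_pow]
  have hzero : f.coeff 0 = 0 := by simp [hcoeff]
  have hone : f.coeff 1 = c 1 := by simp [hcoeff]
  have hlead : f.coeff (2 * g + 1) = c (2 * g + 1) := by simp [hcoeff]
  have hdeg : f.natDegree ≤ 2 * g + 1 :=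
    natDegree_le_iff_coeff_eq_zero.2 fun m hm => by
      rw [hcoeff, if_neg fun hmem => hm.not_ge (Finset.mem_Icc.1 hmem).2]
  have hcoeff_one : f.coeff 1 = 0 :=
    coeff_one_eq_zero_of_rank_cartierManinMatrix_le_one hodd hp hg (X_dvd_iff.2 hzero) hdeg
      (hlead ▸ hclead) hrank
  have hdvd : X ^ 2 ∣ f := X_sq_dvd_of_coeff_eq_zero hzero hcoeff_one
  exact ⟨hone ▸ hcoeff_one, hdvd, not_squarefree_of_X_sq_dvd hdvd⟩

/-- For `g > p`, if the Cartier–Manin matrix of `f` has rank one then `c 1 = 0`;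
consequently `X ^ 2 ∣ f` and `f` is not squarefree. -/
theorem c_one_eq_zero_of_rank_one_of_p_lt_genus
    (p : ℕ) (hp : p.Prime) (hodd : Odd p)
    (k : Type*) [Field k] [IsAlgClosed k] [CharP k p]
    (g : ℕ) (hg : p < g)
    (c : ℕ → k) (hclead : c (2 * g + 1) = 1)
    (f : k[X]) (hf : f = ∑ i ∈ Finset.Icc 1 (2 * g + 1), C (c i) * X ^ i)
    (A : Matrix (Fin g) (Fin g) k)
    (hA : ∀ i j : Fin g,
      A i j = (f ^ ((p - 1) / 2)).coeff (p * ((i : ℕ) + 1) - ((j : ℕ) + 1)))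
    (hrank : A.rank = 1) :
    c 1 = 0 ∧ X ^ 2 ∣ f ∧ ¬ Squarefree f :=
  c_one_eq_zero_of_rank_one_of_p_lt_genus_general p hodd hp.one_lt g hg c
    (hclead ▸ one_ne_zero) f hf A hA hrank.le
end
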